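/- Let k ∈ ℕ, let S_1, …, S_m (m ≥ 1) be binary strings of length ℓ ≥ 1, let T' = γ(S_1)·γ(S_1)·γ(S_2)⋯γ(S_m)·1^{2k+4}·γ(S_m)·1^{2k+4}, and let c = |γ(S_1)| + 2k+4. If C is a binary string of length c that is a k-approximate seed of T' under the Hamming distance, then there exists b with 0 ≤ b < c such that the binary string S = ψ(rot_b(C)) satisfies Ham(S, S_i) ≤ k for all i = 1, …, m. -/

import Mathlib

/-- Hamming distance between two (equal-length) strings:
the number of positions where they differ. -/
def ham : List Bool → List Bool → ℕ
  | x :: U, y :: V => (if x = y then 0 else 1) + ham U V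
  | _, _ => 0

/-- The morphism `φ`: `φ(0) = 0^{2k+4} 1010 0^{2k+4}` and `φ(1) = 0^{2k+4} 1011 0^{2k+4}`,
with `0 ↦ false`, `1 ↦ true`. -/
def phi (k : ℕ) (S : List Bool) : List Bool :=
  S.flatMap fun x =>
    List.replicate (2 * k + 4) false ++ [true, false, true, x] ++
      List.replicate (2 * k + 4) false

/-- `γ(S) = 1^{2k+4} · φ(S)`. -/
def gamma (k : ℕ) (S : List Bool) : List Bool :=
  List.replicate (2 * k + 4) true ++ phi k S

/-- `ψ(U)`: the binary string of length `ℓ` whose `j`-th letter is `U[(j+1)(4k+12) - 1]`. -/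
def psi (k ℓ : ℕ) (U : List Bool) : List Bool :=
  (List.range ℓ).map fun j => U.getD ((j + 1) * (4 * k + 12) - 1) false

/-- `C` is a `k`-approximate cover of `T` under the Hamming distance: `|C| < |T|` and every
position `t` of `T` is covered by a `k`-approximate occurrence of `C` in `T`. -/
def IsApproxCover (k : ℕ) (C T : List Bool) : Prop :=
  C.length < T.length ∧
    ∀ t < T.length, ∃ i, i + C.length ≤ T.length ∧
      ham C ((T.drop i).take C.length) ≤ k ∧ i ≤ t ∧ t < i + C.length

/-- `C` is a `k`-approximate seed of `T`: `2|C| ≤ |T|` and `C` is a `k`-approximate cover of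
some superstring of `T` (a string having `T` as a factor). -/
def IsApproxSeed (k : ℕ) (C T : List Bool) : Prop :=
  2 * C.length ≤ T.length ∧ ∃ T' : List Bool, T <:+: T' ∧ IsApproxCover k C T'

open Finset

/-- letter `y` of the block `φ(b)` -/
def bitB (N y : ℕ) (b : Bool) : Bool :=
  if y = N ∨ y = N + 2 then true else if y = N + 3 then b else false

lemma ham_eq (U V : List Bool) (h : U.length = V.length) :
    ham U V = ((range U.length).filter (fun x => U.getD x false ≠ V.getD x false)).card := by
  induction U generalizing V with
  | nil => cases V <;> simp [ham]
  | cons a U ih =>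
    cases V with
    | nil => simp at h
    | cons b V =>
      have h' : U.length = V.length := by simpa using h
      rw [ham, ih V h', List.length_cons, Finset.card_filter, Finset.card_filter,
        Finset.sum_range_succ']
      simp only [List.getD_cons_succ, List.getD_cons_zero]
      rw [add_comm]
      congr 1
      by_cases hab : a = b <;> simp [hab]

lemma blk_getD (k y : ℕ) (b : Bool) (hy : y < 4 * k + 12) :
    (List.replicate (2 * k + 4) false ++ [true, false, true, b] ++
      List.replicate (2 * k + 4) false).getD y false = bitB (2 * k + 4) y b := by
  unfold bitB
  rw [List.getD_eq_getElem?_getD]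
  by_cases h1 : y < 2 * k + 4
  · rw [List.append_assoc, List.getElem?_append_left (by simpa using h1)]
    rw [if_neg (by omega), if_neg (by omega)]
    simp [h1]
  · by_cases h2 : y < 2 * k + 8
    · rw [List.getElem?_append_left (by simp; omega),
        List.getElem?_append_right (by simp; omega)]
      obtain ⟨d, rfl⟩ := Nat.exists_eq_add_of_le (Nat.le_of_not_lt h1)
      have : d < 4 := by omega
      interval_cases d <;> simp
    · rw [List.getElem?_append_right (by simp; omega)]
      rw [if_neg (by omega), if_neg (by omega)]
      simp [List.getElem?_replicate]
      split <;> simp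

lemma phi_length (k : ℕ) (S : List Bool) : (phi k S).length = S.length * (4 * k + 12) := by
  induction S with
  | nil => simp [phi]
  | cons a S ih =>
    unfold phi at ih ⊢
    rw [List.flatMap_cons, List.length_append, ih]
    simp
    ring

lemma gamma_length (k : ℕ) (S : List Bool) :
    (gamma k S).length = 2 * k + 4 + S.length * (4 * k + 12) := by
  simp [gamma, phi_length]

lemma phi_getD (k : ℕ) (S : List Bool) (j y : ℕ) (hj : j < S.length) (hy : y < 4 * k + 12) :
    (phi k S).getD (j * (4 * k + 12) + y) false = bitB (2 * k + 4) y (S.getD j false) := by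
  induction S generalizing j with
  | nil => simp at hj
  | cons a S ih =>
    have e : phi k (a :: S) = (List.replicate (2 * k + 4) false ++ [true, false, true, a] ++
      List.replicate (2 * k + 4) false) ++ phi k S := by
      simp [phi]
    have el : (List.replicate (2 * k + 4) false ++ [true, false, true, a] ++
      List.replicate (2 * k + 4) false).length = 4 * k + 12 := by simp; ring
    rw [e]
    cases j with
    | zero =>
      rw [List.getD_append _ _ _ _ (by rw [el]; omega)]
      rw [show 0 * (4 * k + 12) + y = y by omega, blk_getD k y a hy]
      simp
    | succ j =>
      rw [List.getD_append_right _ _ _ _ (by rw [el, Nat.succ_mul j]; omega), el,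
        show (j + 1) * (4 * k + 12) + y - (4 * k + 12) = j * (4 * k + 12) + y by
          rw [Nat.succ_mul j]; omega, ih j (by simpa using hj)]
      simp

lemma gamma_getD_lt (k : ℕ) (S : List Bool) (x : ℕ) (hx : x < 2 * k + 4) :
    (gamma k S).getD x false = true := by
  unfold gamma
  rw [List.getD_append _ _ _ _ (by simpa using hx), List.getD_eq_getElem?_getD, List.getElem?_replicate, if_pos hx]
  rfl

lemma gamma_getD (k : ℕ) (S : List Bool) (j y : ℕ) (hj : j < S.length) (hy : y < 4 * k + 12) :
    (gamma k S).getD (2 * k + 4 + j * (4 * k + 12) + y) false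
      = bitB (2 * k + 4) y (S.getD j false) := by
  unfold gamma
  rw [List.getD_append_right _ _ _ _ (by simp; omega), ← phi_getD k S j y hj hy]
  congr 1
  simp
  omega

lemma flatten_length (k ℓ : ℕ) (L : List (List Bool)) (h : ∀ S ∈ L, S.length = ℓ) :
    (L.map (gamma k)).flatten.length = L.length * (2 * k + 4 + ℓ * (4 * k + 12)) := by
  induction L with
  | nil => simp
  | cons a L ih =>
    rw [List.map_cons, List.flatten_cons, List.length_append,
      ih (fun S hS => h S (List.mem_cons_of_mem _ hS)), gamma_length, h a (by simp),
      List.length_cons, Nat.succ_mul L.length, add_comm]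

lemma flatten_getD (k ℓ : ℕ) (L : List (List Bool)) (h : ∀ S ∈ L, S.length = ℓ)
    (q x : ℕ) (hq : q < L.length) (hx : x < 2 * k + 4 + ℓ * (4 * k + 12)) :
    (L.map (gamma k)).flatten.getD (q * (2 * k + 4 + ℓ * (4 * k + 12)) + x) false
      = (gamma k (L.getD q [])).getD x false := by
  induction L generalizing q with
  | nil => simp at hq
  | cons a L ih =>
    have hl : (gamma k a).length = 2 * k + 4 + ℓ * (4 * k + 12) := by
      rw [gamma_length, h a (by simp)]
    rw [List.map_cons, List.flatten_cons]
    cases q with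
    | zero =>
      rw [Nat.zero_mul, Nat.zero_add, List.getD_append _ _ _ _ (by rw [hl]; exact hx)]
      simp
    | succ q =>
      rw [List.getD_append_right _ _ _ _ (by rw [hl, Nat.succ_mul q]; omega), hl,
        show (q + 1) * (2 * k + 4 + ℓ * (4 * k + 12)) + x - (2 * k + 4 + ℓ * (4 * k + 12))
          = q * (2 * k + 4 + ℓ * (4 * k + 12)) + x by rw [Nat.succ_mul q]; omega,
        ih (fun S hS => h S (List.mem_cons_of_mem _ hS)) q (by simpa using hq)]
      simp

lemma rot_getD (C : List Bool) (b x : ℕ) (hb : b < C.length) (hx : x < C.length) :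
    (C.drop b ++ C.take b).getD x false = C.getD ((x + b) % C.length) false := by
  simp only [List.getD_eq_getElem?_getD]
  by_cases h : x + b < C.length
  · rw [List.getElem?_append_left (by simp; omega), Nat.mod_eq_of_lt h, List.getElem?_drop,
      add_comm]
  · rw [List.getElem?_append_right (by simp; omega), Nat.mod_eq_sub_mod (by omega),
      Nat.mod_eq_of_lt (by omega), List.getElem?_take, if_pos (by simp; omega)]
    congr 2
    simp; omega

/-- an occurrence well inside the text -/
lemma occ (k : ℕ) (C T : List Bool) (h : IsApproxSeed k C T) (t : ℕ)
    (h1 : C.length ≤ t + 1) (h2 : t + C.length ≤ T.length) :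
    ∃ i, i ≤ t ∧ t < i + C.length ∧
      ((range C.length).filter (fun x => C.getD x false ≠ T.getD (i + x) false)).card ≤ k := by
  obtain ⟨-, T2, ⟨A, B, rfl⟩, h0, hcov⟩ := h
  have hl : (A ++ T ++ B).length = A.length + T.length + B.length := by simp [add_assoc]
  by_cases hc0 : C.length = 0
  · obtain ⟨I, hI, -, h3, h4⟩ := hcov 0 (by omega)
    omega
  obtain ⟨I, hI, hham, h3, h4⟩ := hcov (A.length + t) (by omega)
  refine ⟨I - A.length, by omega, by omega, ?_⟩
  rw [ham_eq _ _ (by simp at hI ⊢; omega)] at hham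
  refine le_trans (le_of_eq ?_) hham
  congr 1
  apply Finset.filter_congr
  intro x hx
  have hx := Finset.mem_range.1 hx
  have : ((A ++ T ++ B).drop I |>.take C.length).getD x false
      = T.getD (I - A.length + x) false := by
    simp only [List.getD_eq_getElem?_getD]
    rw [List.getElem?_take, if_pos hx, List.getElem?_drop, List.getElem?_append_left
      (by simp; omega), List.getElem?_append_right (by omega)]
    congr 2
    omega
  rw [this]

/-- At most three ones in any window of length `N` inside `φ`. -/
lemma few_ones (N L ℓ : ℕ) (hL : L = 2 * N + 4) (P : ℕ → Bool) (base : ℕ) (f : ℕ → Bool)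
    (hP : ∀ j y, j < ℓ → y < L → P (base + j * L + y) = bitB N y (f j))
    (v : ℕ) (hv : v + N ≤ ℓ * L) :
    N ≤ ((range N).filter (fun z => P (base + v + z) = false)).card + 3 := by
  have hsum := Finset.card_filter_add_card_filter_not (s := range N)
    (fun z => P (base + v + z) = false)
  rw [Finset.card_range] at hsum
  have : ((range N).filter (fun z => ¬ P (base + v + z) = false)).card
      ≤ ({N, N + 2, N + 3} : Finset ℕ).card := by
    apply Finset.card_le_card_of_injOn (fun z => (v + z) % L)
    · intro z hz
      simp only [Finset.coe_filter, Finset.mem_range, Set.mem_ofPred_eq] at hz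
      obtain ⟨hz, hp⟩ := hz
      have hdm := Nat.div_add_mod (v + z) L
      have hm := Nat.mod_lt (v + z) (show 0 < L by omega)
      have hj : (v + z) / L < ℓ := by
        rw [Nat.div_lt_iff_lt_mul (by omega)]; omega
      have := hP _ _ hj hm
      rw [mul_comm] at hdm
      rw [show base + (v + z) / L * L + (v + z) % L = base + v + z by omega] at this
      rw [this] at hp
      unfold bitB at hp
      simp only [Finset.coe_insert, Finset.coe_singleton, Set.mem_insert_iff,
        Set.mem_singleton_iff]
      split_ifs at hp with h1 h2
      · tauto
      · tauto
      · simp at hp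
    · intro z hz w hw h
      simp only [Finset.coe_filter, Finset.mem_range, Set.mem_ofPred_eq] at hz hw
      simp only at h
      have h1 : z % L = w % L := Nat.ModEq.add_left_cancel' v h
      rw [Nat.mod_eq_of_lt (by omega), Nat.mod_eq_of_lt (by omega)] at h1
      exact h1
  have h3 : ({N, N + 2, N + 3} : Finset ℕ).card ≤ 3 := Finset.card_le_three
  omega

lemma shift_card (c N u : ℕ) (hu : u + N ≤ c) (p q : ℕ → Prop) [DecidablePred p]
    [DecidablePred q] (h : ∀ z < N, q z → p (u + z)) :
    ((range N).filter q).card ≤ ((range c).filter p).card := by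
  apply Finset.card_le_card_of_injOn (fun z => u + z)
  · intro z hz
    simp only [Finset.coe_filter, Finset.mem_range, Set.mem_ofPred_eq] at hz ⊢
    exact ⟨by omega, h z hz.1 hz.2⟩
  · intro z _ w _ h
    simpa using h

/-- two mismatches in each of `ℓ` blocks -/
lemma two_card (c a L ℓ y1 y2 : ℕ) (h12 : y1 ≠ y2) (h1 : y1 < L) (h2 : y2 < L)
    (hc : a + ℓ * L ≤ c) (p : ℕ → Prop) [DecidablePred p]
    (hp1 : ∀ j < ℓ, p (a + j * L + y1)) (hp2 : ∀ j < ℓ, p (a + j * L + y2)) :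
    2 * ℓ ≤ ((range c).filter p).card := by
  have hcard : (range ℓ ×ˢ ({y1, y2} : Finset ℕ)).card = 2 * ℓ := by
    rw [Finset.card_product, Finset.card_range, Finset.card_pair h12, mul_comm]
  rw [← hcard]
  apply Finset.card_le_card_of_injOn (fun z => a + z.1 * L + z.2)
  · rintro ⟨j, y⟩ hz
    simp only [Finset.coe_product, Set.mem_prod, Finset.coe_range, Set.mem_Iio,
      Finset.coe_insert, Finset.coe_singleton, Set.mem_insert_iff, Set.mem_singleton_iff] at hz
    simp only [Finset.coe_filter, Finset.mem_range, Set.mem_ofPred_eq]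
    obtain ⟨hj, hy⟩ := hz
    have hjl : (j + 1) * L ≤ ℓ * L := Nat.mul_le_mul_right _ hj
    rw [Nat.succ_mul] at hjl
    rcases hy with rfl | rfl
    · exact ⟨by omega, hp1 j hj⟩
    · exact ⟨by omega, hp2 j hj⟩
  · rintro ⟨j, y⟩ hz ⟨j', y'⟩ hz' h
    simp only [Finset.coe_product, Set.mem_prod, Finset.coe_range, Set.mem_Iio,
      Finset.coe_insert, Finset.coe_singleton, Set.mem_insert_iff, Set.mem_singleton_iff] at hz hz'
    have hy : y < L := by rcases hz.2 with h | h <;> omega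
    have hy' : y' < L := by rcases hz'.2 with h | h <;> omega
    simp only at h
    have h' : j * L + y = j' * L + y' := by omega
    have e1 : j = j' := by
      have : (j * L + y) / L = (j' * L + y') / L := by rw [h']
      rw [mul_comm, mul_comm j', Nat.mul_add_div (by omega), Nat.mul_add_div (by omega),
        Nat.div_eq_of_lt hy, Nat.div_eq_of_lt hy'] at this
      omega
    subst e1
    simp only [Prod.mk.injEq, true_and]
    omega

/-- alignment lemma -/
lemma align (k N L ℓ g c : ℕ) (hN : N = 2 * k + 4) (hL : L = 2 * N + 4) (hk : k < ℓ)
    (hg : g = N + ℓ * L) (hc : c = g + N)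
    (P D : ℕ → Bool) (f : ℕ → ℕ → Bool) (fD : ℕ → Bool) (M : ℕ)
    (hP : ∀ q j y, q ≤ M → j < ℓ → y < L → P (q * g + N + j * L + y) = bitB N y (f q j))
    (a i : ℕ) (ha : a ≤ 2 * N)
    (hD0 : ∀ x < a, D x = true)
    (hD1 : ∀ j y, j < ℓ → y < L → D (a + j * L + y) = bitB N y (fD j))
    (hD2 : ∀ x, a + ℓ * L ≤ x → x < c → D x = true)
    (hi : i + c ≤ (M + 1) * g + N)
    (hcard : ((range c).filter (fun x => D x ≠ P (i + x))).card ≤ 2 * k) :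
    ∃ q, q ≤ M ∧ i + a = q * g + N := by
  have hLl : L ≤ ℓ * L := Nat.le_mul_of_pos_left _ (by omega)
  have hdm := Nat.div_add_mod (i + a) g
  have hρ := Nat.mod_lt (i + a) (show 0 < g by omega)
  set Q := (i + a) / g with hQ
  set ρ := (i + a) % g with hρd
  rw [mul_comm] at hdm
  have hQM : Q ≤ M := by
    by_contra hh
    have : (M + 1) * g ≤ Q * g := Nat.mul_le_mul_right _ (by omega)
    omega
  by_contra hcon
  have hne : ρ ≠ N := fun h => hcon ⟨Q, hQM, by omega⟩
  by_cases hsmall : ρ ≤ 2 * N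
  · -- find y1, y2
    have key : ∃ y1 y2, y1 ≠ y2 ∧ y1 < L ∧ y2 < L ∧ N ≤ y1 + ρ ∧ N ≤ y2 + ρ ∧
        y1 + ρ - N < L ∧ y2 + ρ - N < L ∧
        (∀ b b', bitB N y1 b ≠ bitB N (y1 + ρ - N) b') ∧
        (∀ b b', bitB N y2 b ≠ bitB N (y2 + ρ - N) b') := by
      have aux : ∀ y y', y = N ∨ y = N + 2 → (y' ≠ N ∧ y' ≠ N + 2 ∧ y' ≠ N + 3) →
          ∀ b b', bitB N y b ≠ bitB N y' b' := by
        intro y y' h1 h2 b b'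
        unfold bitB
        rw [if_pos h1, if_neg (by omega), if_neg (by omega)]
        simp
      by_cases c1 : ρ = N + 1
      · refine ⟨N, N + 1, by omega, by omega, by omega, by omega, by omega, by omega, by omega,
          aux _ _ (by omega) (by omega), fun b b' => (aux _ _ (by omega) (by omega) b' b).symm⟩
      by_cases c2 : N < ρ
      · refine ⟨N - (ρ - N), N + 2, by omega, by omega, by omega, by omega, by omega, by omega,
          by omega, fun b b' => (aux _ _ (by omega) (by omega) b' b).symm,
          aux _ _ (by omega) (by omega)⟩
      by_cases c3 : ρ + 1 = N
      · refine ⟨N + 1, N + 2, by omega, by omega, by omega, by omega, by omega, by omega,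
          by omega, fun b b' => (aux _ _ (by omega) (by omega) b' b).symm,
          aux _ _ (by omega) (by omega)⟩
      · refine ⟨N, N + 2 + (N - ρ), by omega, by omega, by omega, by omega, by omega, by omega,
          by omega, aux _ _ (by omega) (by omega),
          fun b b' => (aux _ _ (by omega) (by omega) b' b).symm⟩
    obtain ⟨y1, y2, h12, hy1, hy2, hn1, hn2, hl1, hl2, hb1, hb2⟩ := key
    have := two_card c a L ℓ y1 y2 h12 hy1 hy2 (by omega) (fun x => D x ≠ P (i + x))
      (by
        intro j hj
        rw [hD1 j y1 hj hy1, show i + (a + j * L + y1) = Q * g + N + j * L + (y1 + ρ - N) by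
          omega, hP Q j _ hQM hj hl1]
        exact hb1 _ _)
      (by
        intro j hj
        rw [hD1 j y2 hj hy2, show i + (a + j * L + y2) = Q * g + N + j * L + (y2 + ρ - N) by
          omega, hP Q j _ hQM hj hl2]
        exact hb2 _ _)
    omega
  · by_cases haN : N ≤ a
    · have h1 := few_ones N L ℓ hL P (Q * g + N) (f Q) (fun j y hj hy => hP Q j y hQM hj hy)
        (ρ - 2 * N) (by omega)
      have h2 := shift_card c N (a - N) (by omega) (fun x => D x ≠ P (i + x))
        (fun z => P (Q * g + N + (ρ - 2 * N) + z) = false) (by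
          intro z hz hp
          rw [hD0 _ (by omega), show i + (a - N + z) = Q * g + N + (ρ - 2 * N) + z by omega, hp]
          simp)
      omega
    · have hQM' : Q + 1 ≤ M := by
        by_contra hh
        have : (M + 1) * g ≤ (Q + 1) * g := Nat.mul_le_mul_right _ (by omega)
        rw [Nat.succ_mul Q] at this
        omega
      have h1 := few_ones N L ℓ hL P ((Q + 1) * g + N) (f (Q + 1))
        (fun j y hj hy => hP (Q + 1) j y hQM' hj hy)
        (ρ - 2 * N) (by omega)
      have h2 := shift_card c N (a + ℓ * L) (by omega) (fun x => D x ≠ P (i + x))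
        (fun z => P ((Q + 1) * g + N + (ρ - 2 * N) + z) = false) (by
          intro z hz hp
          rw [hD2 _ (by omega) (by omega), show i + (a + ℓ * L + z)
            = (Q + 1) * g + N + (ρ - 2 * N) + z by rw [Nat.succ_mul]; omega, hp]
          simp)
      omega

/-- the run `1^{2N}` cannot be uncut -/
lemma uncut (k N L ℓ g c : ℕ) (hN : N = 2 * k + 4) (hL : L = 2 * N + 4) (hk : 0 < ℓ)
    (hg : g = N + ℓ * L) (hc : c = g + N)
    (P D : ℕ → Bool) (f : ℕ → ℕ → Bool) (M : ℕ)
    (hP : ∀ q j y, q ≤ M → j < ℓ → y < L → P (q * g + N + j * L + y) = bitB N y (f q j))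
    (w i : ℕ) (hw : w + 2 * N ≤ c)
    (hD : ∀ x, w ≤ x → x < w + 2 * N → D x = true)
    (hi : i + c ≤ (M + 1) * g + N) :
    2 * k < ((range c).filter (fun x => D x ≠ P (i + x))).card := by
  have hLl : L ≤ ℓ * L := Nat.le_mul_of_pos_left _ (by omega)
  have hdm := Nat.div_add_mod (i + w) g
  have hρ := Nat.mod_lt (i + w) (show 0 < g by omega)
  set Q := (i + w) / g with hQ
  set ρ := (i + w) % g with hρd
  rw [mul_comm] at hdm
  have hQM : Q ≤ M := by
    by_contra hh
    have : (M + 1) * g ≤ Q * g := Nat.mul_le_mul_right _ (by omega)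
    omega
  by_cases c1 : ρ < N
  · have h1 := few_ones N L ℓ hL P (Q * g + N) (f Q) (fun j y hj hy => hP Q j y hQM hj hy)
      ρ (by omega)
    have h2 := shift_card c N (w + N) (by omega) (fun x => D x ≠ P (i + x))
      (fun z => P (Q * g + N + ρ + z) = false) (by
        intro z hz hp
        rw [hD _ (by omega) (by omega), show i + (w + N + z) = Q * g + N + ρ + z by omega, hp]
        simp)
    omega
  by_cases c2 : ρ + N ≤ g
  · have h1 := few_ones N L ℓ hL P (Q * g + N) (f Q) (fun j y hj hy => hP Q j y hQM hj hy)
      (ρ - N) (by omega)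
    have h2 := shift_card c N w (by omega) (fun x => D x ≠ P (i + x))
      (fun z => P (Q * g + N + (ρ - N) + z) = false) (by
        intro z hz hp
        rw [hD _ (by omega) (by omega), show i + (w + z) = Q * g + N + (ρ - N) + z by omega, hp]
        simp)
    omega
  · have hQM' : Q + 1 ≤ M := by
      by_contra hh
      have : (M + 1) * g ≤ (Q + 1) * g := Nat.mul_le_mul_right _ (by omega)
      rw [Nat.succ_mul Q] at this
      omega
    have h2 : (range N).card ≤ ((range c).filter (fun x => D x ≠ P (i + x))).card := by
      apply Finset.card_le_card_of_injOn
        (fun z => if ρ + z < g then w + z else w + z + N)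
      · intro z hz
        have hz : z < N := by simpa using hz
        simp only [Finset.coe_filter, Finset.mem_range, Set.mem_ofPred_eq]
        split_ifs with h
        · refine ⟨by omega, ?_⟩
          rw [hD _ (by omega) (by omega)]
          have hh := hP Q (ℓ - 1) (L - (g - (ρ + z))) hQM (by omega) (by omega)
          have hm : (ℓ - 1) * L + L = ℓ * L := by
            rw [← Nat.succ_mul]; congr 1; omega
          rw [show i + (w + z) = Q * g + N + (ℓ - 1) * L + (L - (g - (ρ + z))) by omega, hh]
          unfold bitB
          rw [if_neg (by omega), if_neg (by omega)]
          simp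
        · refine ⟨by omega, ?_⟩
          rw [hD _ (by omega) (by omega)]
          have hh := hP (Q + 1) 0 (ρ + z - g) hQM' (by omega) (by omega)
          rw [show i + (w + z + N) = (Q + 1) * g + N + 0 * L + (ρ + z - g) by
            rw [Nat.succ_mul]; omega, hh]
          unfold bitB
          rw [if_neg (by omega), if_neg (by omega)]
          simp
      · intro z hz z' hz' h
        have hz : z < N := by simpa using hz
        have hz' : z' < N := by simpa using hz'
        simp only at h
        split_ifs at h <;> omega
    rw [Finset.card_range] at h2
    omega

lemma psi_ham (k ℓ : ℕ) (U S : List Bool) (hS : S.length = ℓ) :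
    ham (psi k ℓ U) S = ((range ℓ).filter
      (fun j => U.getD (j * (4 * k + 12) + (4 * k + 11)) false ≠ S.getD j false)).card := by
  rw [ham_eq _ _ (by simp [psi, hS])]
  have : (psi k ℓ U).length = ℓ := by simp [psi]
  rw [this]
  congr 1
  apply Finset.filter_congr
  intro j hj
  have hj := Finset.mem_range.1 hj
  have : (psi k ℓ U).getD j false = U.getD (j * (4 * k + 12) + (4 * k + 11)) false := by
    unfold psi
    rw [List.getD_eq_getElem?_getD, List.getElem?_map, List.getElem?_range hj]
    simp only [Option.map_some, Option.getD_some]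
    congr 1
    rw [Nat.succ_mul]
    omega
  rw [this]

theorem stmt10 (k ℓ m : ℕ) (hm : 1 ≤ m) (hℓ : 1 ≤ ℓ)
    (Ss : List (List Bool)) (hSs : Ss.length = m)
    (hlen : ∀ Si ∈ Ss, Si.length = ℓ)
    (hne : Ss ≠ [])
    (T' : List Bool)
    (hT' : T' = gamma k (Ss.head hne) ++ (Ss.map (gamma k)).flatten ++
      List.replicate (2 * k + 4) true ++ gamma k (Ss.getLast hne) ++
      List.replicate (2 * k + 4) true)
    (c : ℕ) (hc : c = (gamma k (Ss.head hne)).length + 2 * k + 4)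
    (C : List Bool) (hC : C.length = c)
    (hseed : IsApproxSeed k C T') :
    ∃ b, b < c ∧ ∀ Si ∈ Ss, ham (psi k ℓ (C.drop b ++ C.take b)) Si ≤ k := by
  -- trivial case
  by_cases hk : ℓ ≤ k
  · refine ⟨0, by omega, fun Si hSi => ?_⟩
    rw [psi_ham k ℓ _ Si (hlen Si hSi)]
    refine le_trans (Finset.card_filter_le _ _) ?_
    simpa using hk
  push Not at hk
  have hhead : (Ss.head hne).length = ℓ := hlen _ (List.head_mem hne)
  have hlast : (Ss.getLast hne).length = ℓ := hlen _ (List.getLast_mem hne)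
  have hlen' : ∀ S ∈ (Ss.head hne :: Ss), S.length = ℓ := by
    intro S hS
    rcases List.mem_cons.1 hS with rfl | h
    · exact hhead
    · exact hlen S h
  have hTe : T' = (((Ss.head hne :: Ss).map (gamma k)).flatten ++
      List.replicate (2 * k + 4) true) ++ (gamma k (Ss.getLast hne) ++
      List.replicate (2 * k + 4) true) := by
    rw [hT', List.map_cons, List.flatten_cons]
    simp only [List.append_assoc]
  have hfl := flatten_length k ℓ _ hlen'
  have hfg := flatten_getD k ℓ _ hlen'
  have hgl := gamma_length k (Ss.getLast hne)
  have hg0 := gamma_length k (Ss.head hne)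
  have hg1 := gamma_getD_lt k
  have hg2 := gamma_getD k
  have hps := psi_ham k ℓ
  rw [hlast] at hgl
  rw [hhead] at hg0
  have hcons : (Ss.head hne :: Ss).length = m + 1 := by simp [hSs]
  rw [hcons] at hfl hfg
  have hSfm : (Ss.head hne :: Ss).getD m [] = Ss.getLast hne := by
    rw [List.getLast_eq_getElem, List.getD_eq_getElem?_getD]
    obtain ⟨n, rfl⟩ : ∃ n, m = n + 1 := ⟨m - 1, by omega⟩
    rw [List.getElem?_cons_succ, List.getElem?_eq_getElem (by omega)]
    simp [hSs]
  have hSfl : ∀ q ≤ m, ((Ss.head hne :: Ss).getD q []).length = ℓ := by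
    intro q hq
    apply hlen'
    rw [List.getD_eq_getElem _ _ (by omega)]
    exact List.getElem_mem _
  have hSfi : ∀ Si ∈ Ss, ∃ q, 1 ≤ q ∧ q ≤ m ∧ (Ss.head hne :: Ss).getD q [] = Si := by
    intro Si hSi
    obtain ⟨e, he, rfl⟩ := List.getElem_of_mem hSi
    refine ⟨e + 1, by omega, by omega, ?_⟩
    rw [List.getD_cons_succ, List.getD_eq_getElem _ _ he]
  generalize hF : (Ss.head hne :: Ss) = F at *
  have h11 : 4 * k + 11 = 2 * (2 * k + 4) + 3 := by ring
  simp only [h11] at hps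
  have h12 : 4 * k + 12 = 2 * (2 * k + 4) + 4 := by ring
  rw [hg0, add_assoc] at hc
  simp only [h12] at hTe hfl hfg hgl hg0 hg1 hg2 hps hc
  obtain ⟨N, hN⟩ : ∃ N, N = 2 * k + 4 := ⟨_, rfl⟩
  simp only [← hN] at hTe hfl hfg hgl hg0 hg1 hg2 hps hc
  obtain ⟨L, hL⟩ : ∃ L, L = 2 * N + 4 := ⟨_, rfl⟩
  simp only [← hL] at hTe hfl hfg hgl hg0 hg1 hg2 hps hc
  obtain ⟨g, hg⟩ : ∃ g, g = N + ℓ * L := ⟨_, rfl⟩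
  simp only [← hg] at hTe hfl hfg hgl hg0 hg1 hg2 hps hc
  have hLl : L ≤ ℓ * L := Nat.le_mul_of_pos_left _ (by omega)
  have hmul : (m + 1) * g = m * g + g := Nat.succ_mul _ _
  have hTl : T'.length = m * g + 2 * c := by
    rw [hTe]
    simp only [List.length_append, List.length_replicate, hfl, hgl]
    omega
  -- letters of the text
  have hT1 : ∀ q x, q ≤ m → x < g → T'.getD (q * g + x) false = (gamma k (F.getD q [])).getD x false := by
    intro q x hq hx
    have : (q + 1) * g ≤ (m + 1) * g := Nat.mul_le_mul_right _ (by omega)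
    rw [Nat.succ_mul q] at this
    rw [hTe, List.getD_append _ _ _ _ (by simp only [List.length_append, hfl]; omega),
      List.getD_append _ _ _ _ (by omega), hfg q x (by omega) hx]
  have hTper : ∀ q j y, q ≤ m → j < ℓ → y < L →
      T'.getD (q * g + N + j * L + y) false = bitB N y ((F.getD q []).getD j false) := by
    intro q j y hq hj hy
    have : (j + 1) * L ≤ ℓ * L := Nat.mul_le_mul_right _ (by omega)
    rw [Nat.succ_mul j] at this
    rw [show q * g + N + j * L + y = q * g + (N + j * L + y) by omega, hT1 q _ hq (by omega),
      hg2 _ j y (by rw [hSfl q hq]; exact hj) hy]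
  have hone : ∀ x, (x < N ∨ g ≤ x) → x < c → T'.getD (m * g + x) false = true := by
    intro x hx hxc
    rcases Nat.lt_or_ge x g with h | h
    · rw [hT1 m x le_rfl h, hg1 _ _ (by omega)]
    · rw [hTe, List.getD_append _ _ _ _
          (by simp only [List.length_append, List.length_replicate, hfl]; omega),
        List.getD_append_right _ _ _ _ (by omega), List.getD_eq_getElem?_getD,
        List.getElem?_replicate, if_pos (by omega)]
      rfl
  have hcyc : ∀ x, x < c → T'.getD (m * g + c + x) false = T'.getD (m * g + x) false := by
    intro x hx
    have e : (((F.map (gamma k)).flatten ++ List.replicate N true)).length = m * g + c := by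
      simp only [List.length_append, List.length_replicate, hfl]; omega
    have e2 : T'.getD (m * g + c + x) false
        = (gamma k (Ss.getLast hne) ++ List.replicate N true).getD x false := by
      rw [hTe, List.getD_append_right _ _ _ _ (by omega), e]
      congr 1
      omega
    rw [e2]
    rcases Nat.lt_or_ge x g with h | h
    · rw [List.getD_append _ _ _ _ (by omega), hT1 m x le_rfl h, hSfm]
    · rw [hone x (by omega) hx, List.getD_append_right _ _ _ _ (by omega),
        List.getD_eq_getElem?_getD, List.getElem?_replicate, if_pos (by omega)]
      rfl
  -- the main occurrence
  obtain ⟨i0, hi1, hi2, hi3⟩ := occ k C T' hseed (m * g + c - 1) (by omega) (by omega)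
  obtain ⟨s, rfl⟩ : ∃ s, i0 = m * g + s := ⟨i0 - m * g, by omega⟩
  have hs : s < c := by omega
  obtain ⟨b, hb, hr⟩ : ∃ b, b < c ∧ ∀ x < c, (x + b) % c = if x < s then x + c - s else x - s := by
    rcases Nat.eq_zero_or_pos s with rfl | hs0
    · refine ⟨0, by omega, fun x hx => ?_⟩
      rw [if_neg (by omega), Nat.mod_eq_of_lt (by omega)]
      rfl
    · refine ⟨c - s, by omega, fun x hx => ?_⟩
      split_ifs with h
      · rw [Nat.mod_eq_of_lt (by omega)]; omega
      · rw [Nat.mod_eq_sub_mod (by omega), Nat.mod_eq_of_lt (by omega)]; omega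
  refine ⟨b, hb, ?_⟩
  have hxj : ∀ j < ℓ, j * L + (2 * N + 3) + L ≤ c + 3 := by
    intro j hj
    have : (j + 1) * L ≤ ℓ * L := Nat.mul_le_mul_right _ (by omega)
    rw [Nat.succ_mul j] at this
    omega
  have general : ∀ i (S : List Bool), S.length = ℓ →
      ((range C.length).filter (fun x => C.getD x false ≠ T'.getD (i + x) false)).card ≤ k →
      (∀ j < ℓ, T'.getD (i + (j * L + (2 * N + 3) + b) % c) false = S.getD j false) →
      ham (psi k ℓ (C.drop b ++ C.take b)) S ≤ k := by
    intro i S hS hcard hrd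
    rw [hps _ S hS]
    refine le_trans ?_ hcard
    apply Finset.card_le_card_of_injOn (fun j => (j * L + (2 * N + 3) + b) % c)
    · intro j hj
      simp only [Finset.coe_filter, Finset.mem_range, Set.mem_ofPred_eq] at hj ⊢
      have := hxj j hj.1
      refine ⟨by rw [hC]; exact Nat.mod_lt _ (by omega), ?_⟩
      rw [hrd j hj.1]
      have h2 := hj.2
      rw [rot_getD C b _ (by omega) (by omega), hC] at h2
      exact h2
    · intro j hj j' hj' h
      simp only [Finset.coe_filter, Finset.mem_range, Set.mem_ofPred_eq] at hj hj'
      have h1 := hxj j hj.1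
      have h2 := hxj j' hj'.1
      simp only at h
      rw [hr _ (by omega), hr _ (by omega)] at h
      have : j * L = j' * L := by
        split_ifs at h <;> omega
      exact Nat.eq_of_mul_eq_mul_right (by omega) this
  have hbit : ∀ v : Bool, bitB N (N + 3) v = v := by
    intro v
    simp [bitB]
  intro Si hSi
  obtain ⟨q, hq1, hqm, rfl⟩ := hSfi Si hSi
  rcases Nat.eq_or_lt_of_le hqm with rfl | hqlt
  · -- the last string
    apply general (q * g + s) _ (hSfl q le_rfl) hi3
    intro j hj
    have := hxj j hj
    rw [hr _ (by omega), ← hbit ((F.getD q []).getD j false),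
      ← hTper q j (N + 3) le_rfl hj (by omega)]
    split_ifs with h
    · rw [show q * g + N + j * L + (N + 3) = q * g + (j * L + (2 * N + 3)) by omega,
        ← hcyc _ (by omega)]
      congr 1
      omega
    · congr 1
      omega
  · have hqg : (q + 1) * g ≤ m * g := Nat.mul_le_mul_right _ (by omega)
    have hqg1 : 1 * g ≤ q * g := Nat.mul_le_mul_right _ hq1
    rw [Nat.succ_mul q] at hqg
    obtain ⟨i, hia, hib, hic⟩ := occ k C T' hseed (q * g + 2 * N) (by omega) (by omega)
    have hcard : ((range c).filter (fun x => T'.getD (m * g + s + x) false ≠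
        T'.getD (i + x) false)).card ≤ 2 * k := by
      rw [hC] at hi3 hic
      have : ((range c).filter (fun x => T'.getD (m * g + s + x) false ≠ T'.getD (i + x) false)) ⊆
        ((range c).filter (fun x => C.getD x false ≠ T'.getD (m * g + s + x) false)) ∪
        ((range c).filter (fun x => C.getD x false ≠ T'.getD (i + x) false)) := by
        intro x hx
        simp only [Finset.mem_union, Finset.mem_filter] at hx ⊢
        by_cases h : C.getD x false = T'.getD (m * g + s + x) false
        · right
          exact ⟨hx.1, by rw [h]; exact hx.2⟩
        · left
          exact ⟨hx.1, h⟩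
      have h1 := Finset.card_le_card this
      have h2 := Finset.card_union_le
        ((range c).filter (fun x => C.getD x false ≠ T'.getD (m * g + s + x) false))
        ((range c).filter (fun x => C.getD x false ≠ T'.getD (i + x) false))
      omega
    -- the run of ones is cut
    have hcut : s ≤ N ∨ c ≤ s + N := by
      by_contra hcon
      push Not at hcon
      have := uncut k N L ℓ g c hN hL (by omega) hg (by omega) (fun p => T'.getD p false)
        (fun x => T'.getD (m * g + s + x) false) (fun q j => (F.getD q []).getD j false) m
        hTper (c - N - s) i (by omega) (by
          intro x hx1 hx2
          rcases Nat.lt_or_ge (s + x) c with h | h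
          · rw [show m * g + s + x = m * g + (s + x) by omega, hone _ (by omega) h]
          · rw [show m * g + s + x = m * g + c + (s + x - c) by omega, hcyc _ (by omega),
              hone _ (by omega) (by omega)]) (by omega)
      omega
    obtain ⟨a, ha, hac⟩ : ∃ a, a ≤ 2 * N ∧ (a + s = N ∨ (a + s = c + N ∧ N ≤ a)) := by
      rcases hcut with h | h
      · exact ⟨N - s, by omega, by omega⟩
      · exact ⟨c + N - s, by omega, by omega⟩
    have hal := align k N L ℓ g c hN hL hk hg (by omega) (fun p => T'.getD p false)
        (fun x => T'.getD (m * g + s + x) false) (fun q j => (F.getD q []).getD j false)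
        (fun j => (F.getD m []).getD j false) m
        hTper a i ha
        (by
          intro x hx
          rcases Nat.lt_or_ge (s + x) c with h | h
          · rw [show m * g + s + x = m * g + (s + x) by omega, hone _ (by omega) h]
          · rw [show m * g + s + x = m * g + c + (s + x - c) by omega, hcyc _ (by omega),
              hone _ (by omega) (by omega)])
        (by
          intro j y hj hy
          have := hxj j hj
          rw [← hTper m j y le_rfl hj hy]
          rcases hac with h | h
          · congr 1
            omega
          · rw [show m * g + N + j * L + y = m * g + (N + j * L + y) by omega,
              ← hcyc _ (by omega)]
            congr 1
            omega)
        (by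
          intro x hx1 hx2
          rcases Nat.lt_or_ge (s + x) c with h | h
          · rw [show m * g + s + x = m * g + (s + x) by omega, hone _ (by omega) h]
          · rw [show m * g + s + x = m * g + c + (s + x - c) by omega, hcyc _ (by omega),
              hone _ (by omega) (by omega)])
        (by omega) hcard
    obtain ⟨p, hpm, hp⟩ := hal
    have hpq : p = q := by
      rcases Nat.lt_trichotomy p q with h | h | h
      · have : (p + 1) * g ≤ q * g := Nat.mul_le_mul_right _ h
        rw [Nat.succ_mul p] at this
        omega
      · exact h
      · have : (q + 1) * g ≤ p * g := Nat.mul_le_mul_right _ h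
        rw [Nat.succ_mul q] at this
        omega
    subst hpq
    apply general i _ (hSfl p hpm) hic
    intro j hj
    have := hxj j hj
    rw [hr _ (by omega), ← hbit ((F.getD p []).getD j false),
      ← hTper p j (N + 3) hpm hj (by omega)]
    congr 1
    split_ifs with h <;> omega
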